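/- Let k : ℝ² → ℂ be measurable and satisfy the Kernel assumption (B.1). Then there exists a compact continuous linear operator K on L²(ℝ; ℂ) such that for every u ∈ L²(ℝ; ℂ) one has (K u)(s) = ∫_ℝ k(s,t) u(t) dt for almost every s ∈ ℝ (in particular, the integral on the right converges absolutely for almost every s, and the resulting function lies in L²(ℝ; ℂ)). -/

import Mathlib

open MeasureTheory

open scoped ENNReal NNReal

lemma eLpNorm_two_sq {f : ℝ → ℂ} :
    eLpNorm f 2 volume ^ 2 = ∫⁻ x, ‖f x‖ₑ ^ 2 := by
  have := eLpNorm_nnreal_pow_eq_lintegral (μ := (volume : Measure ℝ)) (f := f) (p := 2) (by norm_num)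
  simp only [NNReal.coe_ofNat, ENNReal.rpow_ofNat] at this
  exact this

lemma schur_aux (k : ℝ × ℝ → ℂ) (φ : ℝ → ℝ≥0∞) (hφ : Measurable φ)
    (M : ℝ≥0) (hM : ∫⁻ x, φ x ≤ M) (hb : ∀ s t, s ≠ t → ‖k (s, t)‖ₑ ≤ φ (s - t))
    (u : ℝ → ℂ) (hu : Measurable u) :
    ∫⁻ s, (∫⁻ t, ‖k (s, t) * u t‖ₑ) ^ 2 ≤ (M : ℝ≥0∞) ^ 2 * ∫⁻ t, ‖u t‖ₑ ^ 2 := by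
  have h1 : ∀ s, (∫⁻ t, ‖k (s, t) * u t‖ₑ) ^ 2 ≤ M * ∫⁻ t, φ (s - t) * ‖u t‖ₑ ^ 2 := by
    intro s
    have hne : ∀ᵐ t : ℝ, t ≠ s := by
      simp [ae_iff]
    have hle : ∫⁻ t, ‖k (s, t) * u t‖ₑ ≤
        ∫⁻ t, ((fun t => φ (s - t) ^ (1/2 : ℝ)) * (fun t => φ (s - t) ^ (1/2 : ℝ) * ‖u t‖ₑ)) t := by
      apply lintegral_mono_ae
      filter_upwards [hne] with t ht
      simp only [Pi.mul_apply, enorm_mul]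
      rw [← mul_assoc, ← ENNReal.rpow_add_of_nonneg _ _ (by norm_num) (by norm_num)]
      norm_num
      gcongr
      exact hb s t ht.symm
    have hm1 : Measurable fun t => φ (s - t) := hφ.comp (by fun_prop)
    have hcs := ENNReal.lintegral_mul_le_Lp_mul_Lq (volume : Measure ℝ)
      (p := 2) (q := 2) (by constructor <;> norm_num)
      (f := fun t => φ (s - t) ^ (1/2 : ℝ)) (g := fun t => φ (s - t) ^ (1/2 : ℝ) * ‖u t‖ₑ)
      (by fun_prop) (by fun_prop)
    have e1 : ∀ x : ℝ≥0∞, (x ^ (1/2 : ℝ)) ^ (2:ℝ) = x := by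
      intro x
      rw [← ENNReal.rpow_mul]; norm_num
    have e2 : ∀ x : ℝ≥0∞, (x ^ (1/2 : ℝ)) ^ 2 = x := by
      intro x
      rw [← ENNReal.rpow_natCast]; exact_mod_cast e1 x
    simp_rw [ENNReal.mul_rpow_of_nonneg _ _ (by norm_num : (0:ℝ) ≤ 2), e1] at hcs
    calc (∫⁻ t, ‖k (s, t) * u t‖ₑ) ^ 2 ≤ _ := pow_le_pow_left₀ (by simp) (hle.trans hcs) 2
      _ = (∫⁻ t, φ (s - t)) * ∫⁻ t, φ (s - t) * ‖u t‖ₑ ^ 2 := by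
        rw [mul_pow, e2, e2]
        simp
      _ ≤ _ := by
        rw [lintegral_sub_left_eq_self]
        gcongr
  have hm2 : Measurable (Function.uncurry fun s t => φ (s - t) * ‖u t‖ₑ ^ 2) := by
    have : Measurable fun p : ℝ × ℝ => φ (p.1 - p.2) := hφ.comp (by fun_prop)
    have h' : Measurable fun p : ℝ × ℝ => ‖u p.2‖ₑ ^ 2 := by fun_prop
    exact this.mul h'
  calc _ ≤ ∫⁻ s, M * ∫⁻ t, φ (s - t) * ‖u t‖ₑ ^ 2 := lintegral_mono h1
    _ = M * ∫⁻ t, ∫⁻ s, φ (s - t) * ‖u t‖ₑ ^ 2 := by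
      rw [lintegral_const_mul _ hm2.lintegral_prod_right, lintegral_lintegral_swap hm2.aemeasurable]
    _ = M * ∫⁻ t, (∫⁻ s, φ s) * ‖u t‖ₑ ^ 2 := by
      congr 2 with t
      have hm3 : Measurable fun s => φ (s - t) := hφ.comp (by fun_prop)
      rw [lintegral_mul_const _ hm3, lintegral_sub_right_eq_self]
    _ = M * ((∫⁻ s, φ s) * ∫⁻ t, ‖u t‖ₑ ^ 2) := by
      rw [lintegral_const_mul _ (by fun_prop)]
    _ ≤ _ := by
      rw [sq, mul_assoc]; gcongr

/-- The property that `K` is the integral operator with kernel `k`. -/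
def IsKer (K : Lp ℂ 2 (volume : Measure ℝ) →L[ℂ] Lp ℂ 2 (volume : Measure ℝ))
    (k : ℝ × ℝ → ℂ) : Prop :=
  ∀ u : Lp ℂ 2 (volume : Measure ℝ),
        (∀ᵐ s : ℝ, Integrable (fun t : ℝ => k (s, t) * u t) volume) ∧
        (∀ᵐ s : ℝ, (K u : ℝ → ℂ) s = ∫ t : ℝ, k (s, t) * u t)

lemma schur (k : ℝ × ℝ → ℂ) (hk : Measurable k) (φ : ℝ → ℝ≥0∞) (hφ : Measurable φ)
    (M : ℝ≥0) (hM : ∫⁻ x, φ x ≤ M) (hb : ∀ s t, s ≠ t → ‖k (s, t)‖ₑ ≤ φ (s - t)) :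
    ∃ K : Lp ℂ 2 (volume : Measure ℝ) →L[ℂ] Lp ℂ 2 (volume : Measure ℝ),
      ‖K‖ ≤ M ∧ IsKer K k := by
  have hmeas : ∀ u : Lp ℂ 2 (volume : Measure ℝ), Measurable fun p : ℝ × ℝ => k p * u p.2 :=
    fun u => hk.mul ((Lp.stronglyMeasurable u).measurable.comp measurable_snd)
  have hbd : ∀ u : Lp ℂ 2 (volume : Measure ℝ),
      ∫⁻ s, (∫⁻ t, ‖k (s, t) * u t‖ₑ) ^ 2 ≤ ((M : ℝ≥0∞) * ‖u‖ₑ) ^ 2 := by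
    intro u
    refine (schur_aux k φ hφ M hM hb u (Lp.stronglyMeasurable u).measurable).trans ?_
    rw [mul_pow, Lp.enorm_def, eLpNorm_two_sq]
  have hint : ∀ u : Lp ℂ 2 (volume : Measure ℝ),
      ∀ᵐ s : ℝ, Integrable (fun t : ℝ => k (s, t) * u t) volume := by
    intro u
    have hfin : ∫⁻ s, (∫⁻ t, ‖k (s, t) * u t‖ₑ) ^ 2 ≠ ∞ :=
      ne_top_of_le_ne_top (by finiteness) (hbd u)
    have hm : Measurable fun s => (∫⁻ t, ‖k (s, t) * u t‖ₑ) ^ 2 :=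
      ((hmeas u).enorm.lintegral_prod_right').pow_const 2
    filter_upwards [ae_lt_top hm hfin] with s hs
    refine ⟨((hmeas u).comp measurable_prodMk_left).aestronglyMeasurable, ?_⟩
    rw [hasFiniteIntegral_iff_enorm]
    by_contra hcon
    simp only [not_lt, top_le_iff] at hcon
    rw [hcon] at hs
    simp at hs
  have hsm : ∀ u : Lp ℂ 2 (volume : Measure ℝ),
      StronglyMeasurable fun s => ∫ t, k (s, t) * u t := fun u =>
    StronglyMeasurable.integral_prod_right (f := fun s t => k (s, t) * u t)
      (hmeas u).stronglyMeasurable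
  have hn : ∀ u : Lp ℂ 2 (volume : Measure ℝ),
      eLpNorm (fun s => ∫ t, k (s, t) * u t) 2 volume ≤ M * ‖u‖ₑ := by
    intro u
    rw [← ENNReal.pow_le_pow_left_iff (two_ne_zero), eLpNorm_two_sq]
    refine le_trans ?_ (hbd u)
    gcongr
    exact enorm_integral_le_lintegral_enorm _
  have hmem : ∀ u : Lp ℂ 2 (volume : Measure ℝ),
      MemLp (fun s => ∫ t, k (s, t) * u t) 2 volume := fun u =>
    ⟨(hsm u).aestronglyMeasurable, lt_of_le_of_lt (hn u) (by finiteness)⟩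
  let L : Lp ℂ 2 (volume : Measure ℝ) →ₗ[ℂ] Lp ℂ 2 (volume : Measure ℝ) :=
    { toFun := fun u => (hmem u).toLp
      map_add' := by
        intro u v
        apply Lp.ext
        filter_upwards [(hmem (u+v)).coeFn_toLp, (hmem u).coeFn_toLp, (hmem v).coeFn_toLp,
          Lp.coeFn_add ((hmem u).toLp) ((hmem v).toLp), hint u, hint v] with s h1 h2 h3 h4 h5 h6
        rw [h1, h4, Pi.add_apply, h2, h3, ← integral_add h5 h6]
        apply integral_congr_ae
        filter_upwards [Lp.coeFn_add u v] with t ht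
        rw [ht, Pi.add_apply, mul_add]
      map_smul' := by
        intro c u
        apply Lp.ext
        filter_upwards [(hmem (c • u)).coeFn_toLp, (hmem u).coeFn_toLp,
          Lp.coeFn_smul c ((hmem u).toLp)] with s h1 h2 h4
        rw [h1, RingHom.id_apply, h4, Pi.smul_apply, h2, ← integral_smul]
        apply integral_congr_ae
        filter_upwards [Lp.coeFn_smul c u] with t ht
        rw [ht, Pi.smul_apply, smul_eq_mul, smul_eq_mul]
        ring }
  have hL : ∀ u, ‖L u‖ ≤ M * ‖u‖ := by
    intro u
    change ‖(hmem u).toLp‖ ≤ _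
    rw [Lp.norm_toLp]
    refine (ENNReal.toReal_mono (by finiteness) (hn u)).trans ?_
    simp
  refine ⟨L.mkContinuous M hL, L.mkContinuous_norm_le (by positivity) hL, fun u => ⟨hint u, ?_⟩⟩
  exact (hmem u).coeFn_toLp

lemma compact_of_summable {E : Type*} [NormedAddCommGroup E] [InnerProductSpace ℂ E]
    [CompleteSpace E] {ι : Type*} (b : HilbertBasis ι ℂ E) (T : E →L[ℂ] E)
    (hT : Summable fun i => ‖T (b i)‖ ^ 2) : IsCompactOperator T := by
  classical
  let F : Finset ι → E →L[ℂ] E := fun s =>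
    ∑ i ∈ s, (ContinuousLinearMap.toSpanSingleton ℂ (T (b i))).comp (innerSL ℂ (b i))
  have hFa : ∀ s u, F s u = ∑ i ∈ s, inner ℂ (b i) u • T (b i) := by
    intro s u
    simp [F]
  have hF : ∀ s, IsCompactOperator (F s) := by
    intro s
    have : F s ∈ compactOperator (RingHom.id ℂ) E E := by
      apply Submodule.sum_mem
      intro i _
      exact (isCompactOperator_of_locallyCompactSpace_dom (innerSL ℂ (b i))).clm_comp
        (ContinuousLinearMap.toSpanSingleton ℂ (T (b i)))
    exact this
  have key : ∀ ε : ℝ, 0 < ε → ∃ s, ∀ s' ≥ s, ‖F s' - T‖ ≤ ε := by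
    intro ε hε
    obtain ⟨s, hs⟩ := (summable_iff_vanishing_norm.1 hT) (ε ^ 2) (by positivity)
    refine ⟨s, fun s' hss' => ContinuousLinearMap.opNorm_le_bound _ hε.le fun u => ?_⟩
    have hsum : HasSum (fun i => inner ℂ (b i) u • T (b i)) (T u) := by
      have := (b.hasSum_repr u).mapL T
      simpa [b.repr_apply_apply] using this
    have hlim : Filter.Tendsto (fun G => ‖F s' u - F G u‖) Filter.atTop (nhds ‖F s' u - T u‖) := by
      have h0 : Filter.Tendsto (fun G => F G u) Filter.atTop (nhds (T u)) := by
        simp only [hFa]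
        exact hsum
      exact (tendsto_const_nhds.sub h0).norm
    refine le_of_tendsto hlim ?_
    filter_upwards [Filter.eventually_ge_atTop s'] with G hG
    rw [norm_sub_rev, hFa, hFa, ← Finset.sum_sdiff hG, add_sub_cancel_right]
    have hb2 : ∑ i ∈ G \ s', ‖T (b i)‖ ^ 2 ≤ ε ^ 2 := by
      have := hs (G \ s') (Finset.disjoint_of_subset_right hss' Finset.sdiff_disjoint)
      exact ((le_abs_self _).trans this.le)
    refine abs_le_of_sq_le_sq' ?_ (by positivity) |>.2
    calc ‖∑ i ∈ G \ s', inner ℂ (b i) u • T (b i)‖ ^ 2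
        ≤ (∑ i ∈ G \ s', ‖inner ℂ (b i) u‖ * ‖T (b i)‖) ^ 2 := by
          gcongr
          refine (norm_sum_le _ _).trans (le_of_eq ?_)
          simp [norm_smul]
      _ ≤ (∑ i ∈ G \ s', ‖inner ℂ (b i) u‖ ^ 2) * ∑ i ∈ G \ s', ‖T (b i)‖ ^ 2 :=
          Finset.sum_mul_sq_le_sq_mul_sq _ _ _
      _ ≤ ‖u‖ ^ 2 * ε ^ 2 := by
          gcongr
          exact b.orthonormal.sum_inner_products_le u
      _ = (ε * ‖u‖) ^ 2 := by ring
  refine isCompactOperator_of_tendsto (l := Filter.atTop) (F := F) ?_ (Filter.Eventually.of_forall hF)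
  rw [Metric.tendsto_atTop]
  intro ε hε
  obtain ⟨s, hs⟩ := key (ε / 2) (by positivity)
  exact ⟨s, fun n hn => by rw [dist_eq_norm]; linarith [hs n hn]⟩

lemma compact_of_bdd (h : ℝ × ℝ → ℂ) (hm : Measurable h) (N B : ℝ≥0)
    (hb : ∀ s t, ‖h (s, t)‖ₑ ≤ N)
    (hs : ∀ s t, (s ∉ Set.Icc (-B : ℝ) B ∨ t ∉ Set.Icc (-B : ℝ) B) → h (s, t) = 0)
    (T : Lp ℂ 2 (volume : Measure ℝ) →L[ℂ] Lp ℂ 2 (volume : Measure ℝ))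
    (hT : IsKer T h) : IsCompactOperator T := by
  have hmt : ∀ s, Measurable fun t => h (s, t) := fun s => hm.comp measurable_prodMk_left
  set I := Set.Icc (-B : ℝ) B with hI
  have hIv : volume I = 2 * B := by
    rw [hI, Real.volume_Icc, sub_neg_eq_add, ← two_mul, ENNReal.ofReal_mul (by norm_num)]
    simp
  set c : ℝ≥0 := N ^ 2 * (2 * B) with hc
  have hsq : ∀ s, ∫⁻ t, ‖star (h (s, t))‖ₑ ^ 2 ≤ I.indicator (fun _ => (c : ℝ≥0∞)) s := by
    intro s
    by_cases hsI : s ∈ I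
    · rw [Set.indicator_of_mem hsI]
      calc _ ≤ ∫⁻ t, I.indicator (fun _ => (N : ℝ≥0∞) ^ 2) t := by
            apply lintegral_mono
            intro t
            by_cases ht : t ∈ I
            · simp only [Set.indicator_of_mem ht]
              gcongr
              simpa [enorm_eq_nnnorm] using hb s t
            · simp [hs s t (Or.inr ht)]
        _ = _ := by
          rw [lintegral_indicator_const measurableSet_Icc, hIv]
          simp [hc]
    · simp [hs s _ (Or.inl hsI)]
  have hmem : ∀ s, MemLp (fun t => star (h (s, t))) 2 volume := by
    intro s
    refine ⟨(continuous_star.measurable.comp (hmt s)).aestronglyMeasurable, ?_⟩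
    have : eLpNorm (fun t => star (h (s, t))) 2 volume ^ 2 < ∞ := by
      rw [eLpNorm_two_sq]
      refine (hsq s).trans_lt ?_
      by_cases hsI : s ∈ I <;> simp [hsI]
    simpa using this
  have hinner : ∀ s (u : Lp ℂ 2 (volume : Measure ℝ)),
      inner ℂ ((hmem s).toLp) u = ∫ t, h (s, t) * u t := by
    intro s u
    rw [L2.inner_def]
    apply integral_congr_ae
    filter_upwards [(hmem s).coeFn_toLp] with t ht
    rw [ht]
    simp [mul_comm]
  obtain ⟨w, b, -⟩ := exists_hilbertBasis ℂ (Lp ℂ 2 (volume : Measure ℝ))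
  refine compact_of_summable b T (summable_of_sum_le (c := ((c * (2 * B) : ℝ≥0) : ℝ))
    (fun i => by positivity) fun F => ?_)
  have hen : ∑ i ∈ F, ‖T (b i)‖ₑ ^ 2 ≤ ((c * (2 * B) : ℝ≥0) : ℝ≥0∞) := by
    calc ∑ i ∈ F, ‖T (b i)‖ₑ ^ 2 = ∫⁻ s, ∑ i ∈ F, ‖T (b i) s‖ₑ ^ 2 := by
          rw [lintegral_finsetSum]
          · simp_rw [Lp.enorm_def, eLpNorm_two_sq]
          · intro i _
            have := (Lp.stronglyMeasurable (T (b i))).measurable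
            fun_prop
      _ ≤ ∫⁻ s, I.indicator (fun _ => (c : ℝ≥0∞)) s := by
          apply lintegral_mono_ae
          have hall : ∀ᵐ s, ∀ i ∈ F, T (b i) s = ∫ t, h (s, t) * b i t := by
            rw [Filter.eventually_all_finset]
            intro i _
            exact (hT (b i)).2
          filter_upwards [hall] with s hs'
          refine le_trans ?_ (hsq s)
          rw [← eLpNorm_two_sq, ← Lp.enorm_toLp (hmem s)]
          have hbes := b.orthonormal.sum_inner_products_le (s := F) ((hmem s).toLp)
          have e : ∀ i ∈ F, ‖T (b i) s‖ₑ ^ 2 =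
              ENNReal.ofReal (‖inner ℂ (b i) ((hmem s).toLp)‖ ^ 2) := by
            intro i hi
            rw [hs' i hi, ← hinner, norm_inner_symm, ENNReal.ofReal_pow (norm_nonneg _),
              ofReal_norm]
          rw [Finset.sum_congr rfl e, ← ENNReal.ofReal_sum_of_nonneg (fun _ _ => by positivity),
            ← ofReal_norm, ← ENNReal.ofReal_pow (norm_nonneg _)]
          exact ENNReal.ofReal_le_ofReal hbes
      _ = _ := by
          rw [lintegral_indicator_const measurableSet_Icc, hIv]
          simp
  have := ENNReal.toReal_mono (by finiteness) hen
  rw [ENNReal.toReal_sum (fun _ _ => by finiteness)] at this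
  simpa using this

/-- Let `k : ℝ² → ℂ` be measurable and satisfy the Kernel assumption (B.1).
Then there exists a compact continuous linear operator `K` on `L²(ℝ; ℂ)` such that for
every `u ∈ L²(ℝ; ℂ)` the integral `∫ k(s,t) u(t) dt` converges absolutely for a.e. `s` and
`(K u)(s) = ∫ k(s,t) u(t) dt` for a.e. `s`. -/
theorem stmt_6 (k : ℝ × ℝ → ℂ) (hk : Measurable k)
    (R C κ α : ℝ) (hR : 0 < R) (hC : 0 < C) (hκ : 0 < κ) (hα : α ∈ Set.Ico (0 : ℝ) 1)
    (hbdd1 : ∀ s t : ℝ, s ≠ t → |s| ≤ 3 * R → |t| ≤ 3 * R →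
      ‖k (s, t)‖ ≤ C * |s - t| ^ (-α))
    (hbdd2 : ∀ s t : ℝ, s ≠ t → |s - t| > 2 * R →
      ‖k (s, t)‖ ≤ C * Real.exp (-κ * |s - t|))
    (hzero : ∀ s t : ℝ, (R < s ∧ R < t) ∨ (s < -R ∧ t < -R) → k (s, t) = 0) :
    ∃ K : Lp ℂ 2 (volume : Measure ℝ) →L[ℂ] Lp ℂ 2 (volume : Measure ℝ),
      IsCompactOperator K ∧
      ∀ u : Lp ℂ 2 (volume : Measure ℝ),
        (∀ᵐ s : ℝ, Integrable (fun t : ℝ => k (s, t) * u t) volume) ∧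
        (∀ᵐ s : ℝ, (K u : ℝ → ℂ) s = ∫ t : ℝ, k (s, t) * u t) := by
  -- the majorant
  let g : ℝ → ℝ := fun x => (Set.Ioc 0 (6 * R)).indicator (fun x => C * x ^ (-α)) x +
    (Set.Ioi 0).indicator (fun x => C * Real.exp (-κ * x)) x
  have hg0 : ∀ x, 0 ≤ g x := by
    intro x
    refine add_nonneg (Set.indicator_nonneg (fun y hy => ?_) _)
      (Set.indicator_nonneg (fun y hy => ?_) _)
    · have := hy.1.le
      positivity
    · positivity
  have hgm : Measurable g :=
    (Measurable.indicator (by fun_prop) measurableSet_Ioc).add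
      (Measurable.indicator (by fun_prop) measurableSet_Ioi)
  have hgi : Integrable g := by
    apply Integrable.add
    · rw [integrable_indicator_iff measurableSet_Ioc]
      apply Integrable.const_mul
      have := (intervalIntegral.intervalIntegrable_rpow' (a := 0) (b := 6 * R) (r := -α)
        (by linarith [hα.2]))
      exact this.1
    · rw [integrable_indicator_iff measurableSet_Ioi]
      apply Integrable.const_mul
      exact integrableOn_exp_mul_Ioi (by linarith) 0
  let φ₀ : ℝ → ℝ := fun x => g x + g (-x)
  have hφ₀m : Measurable φ₀ := hgm.add (hgm.comp measurable_neg)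
  have hφ₀i : Integrable φ₀ := hgi.add hgi.comp_neg
  have hgφ : ∀ x, g |x| ≤ φ₀ x := by
    intro x
    rcases abs_choice x with h | h <;> rw [h] <;> simp only [φ₀] <;> linarith [hg0 x, hg0 (-x)]
  have hkφ : ∀ s t, s ≠ t → ‖k (s, t)‖ ≤ φ₀ (s - t) := by
    intro s t hst
    refine le_trans ?_ (hgφ _)
    have hpos : 0 < |s - t| := abs_pos.2 (sub_ne_zero.2 hst)
    have hexp : C * Real.exp (-κ * |s - t|) ≤ g |s - t| := by
      simp only [g]
      rw [Set.indicator_of_mem (show |s - t| ∈ Set.Ioi 0 from hpos)]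
      have : 0 ≤ (Set.Ioc 0 (6 * R)).indicator (fun x => C * x ^ (-α)) |s - t| :=
        Set.indicator_nonneg (fun y hy => by have := hy.1.le; positivity) _
      linarith
    by_cases h1 : |s| ≤ 3 * R ∧ |t| ≤ 3 * R
    · refine (hbdd1 s t hst h1.1 h1.2).trans ?_
      simp only [g]
      have hmem : |s - t| ∈ Set.Ioc 0 (6 * R) :=
        ⟨hpos, (abs_sub _ _).trans (by linarith [h1.1, h1.2])⟩
      rw [Set.indicator_of_mem hmem, Set.indicator_of_mem (show |s - t| ∈ Set.Ioi 0 from hpos)]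
      have : 0 < C * Real.exp (-κ * |s - t|) := by positivity
      linarith
    · by_cases hz : (R < s ∧ R < t) ∨ (s < -R ∧ t < -R)
      · rw [hzero s t hz, norm_zero]
        exact hg0 _
      · refine (hbdd2 s t hst ?_).trans hexp
        push Not at hz
        obtain ⟨hz1, hz2⟩ := hz
        rw [gt_iff_lt, lt_abs]
        by_contra hcon
        push Not at hcon
        apply h1
        rw [abs_le, abs_le]
        refine ⟨⟨?_, ?_⟩, ⟨?_, ?_⟩⟩ <;> by_contra hc <;> push Not at hc <;>
          first
          | linarith [hz1 (by linarith)]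
          | linarith [hz2 (by linarith)]
  let φ : ℝ → ℝ≥0∞ := fun x => ENNReal.ofReal (φ₀ x)
  have hφm : Measurable φ := hφ₀m.ennreal_ofReal
  have hφfin : ∫⁻ x, φ x ≠ ∞ := hφ₀i.lintegral_lt_top.ne
  have hbφ : ∀ s t, s ≠ t → ‖k (s, t)‖ₑ ≤ φ (s - t) := by
    intro s t hst
    rw [← ofReal_norm]
    exact ENNReal.ofReal_le_ofReal (hkφ s t hst)
  obtain ⟨K, -, hK⟩ := schur k hk φ hφm (∫⁻ x, φ x).toNNReal
    (ENNReal.coe_toNNReal hφfin).ge hbφ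
  refine ⟨K, ?_, hK⟩
  -- truncations
  let A : ℕ → Set ℝ := fun n => {x | x ≠ 0 ∧ |x| ≤ n ∧ φ₀ x ≤ n}
  have hA : ∀ n, MeasurableSet (A n) := by
    intro n
    have h1 : MeasurableSet {x : ℝ | |x| ≤ n} :=
      measurableSet_le (continuous_abs.measurable) measurable_const
    have h2 : MeasurableSet {x : ℝ | φ₀ x ≤ n} := measurableSet_le hφ₀m measurable_const
    have h3 : MeasurableSet {x : ℝ | x ≠ 0} := (measurableSet_singleton (0:ℝ)).compl
    exact h3.inter (h1.inter h2)
  let P : ℕ → Set (ℝ × ℝ) := fun n => (fun p : ℝ × ℝ => p.1 - p.2) ⁻¹' (A n)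
  have hP : ∀ n, MeasurableSet (P n) := fun n => (hA n).preimage (by fun_prop)
  have htail : Filter.Tendsto (fun n => ∫⁻ x, ((A n)ᶜ).indicator φ x) Filter.atTop (nhds 0) := by
    have := tendsto_lintegral_of_dominated_convergence (μ := (volume : Measure ℝ))
      (F := fun n => ((A n)ᶜ).indicator φ) (f := fun _ => 0) φ
      (fun n => hφm.indicator (hA n).compl)
      (fun n => Filter.Eventually.of_forall fun x => Set.indicator_le_self _ _ x) hφfin ?_
    · simpa using this
    · have hne : ∀ᵐ x : ℝ, x ≠ 0 := by simp [ae_iff]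
      filter_upwards [hne] with x hx
      apply tendsto_const_nhds.congr'
      obtain ⟨m, hm⟩ := exists_nat_ge (max |x| (φ₀ x))
      filter_upwards [Filter.eventually_ge_atTop m] with n hn
      have hmn : (m : ℝ) ≤ n := by exact_mod_cast hn
      have hxA : x ∈ A n := ⟨hx, (le_max_left _ _).trans (hm.trans hmn),
        (le_max_right _ _).trans (hm.trans hmn)⟩
      simp [hxA]
  have hcl : K ∈ closure {T : Lp ℂ 2 (volume : Measure ℝ) →L[ℂ] Lp ℂ 2 (volume : Measure ℝ) |
      IsCompactOperator T} := by
    rw [Metric.mem_closure_iff]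
    intro ε hε
    obtain ⟨n, hn⟩ := (htail.eventually_le_const
      (show (0 : ℝ≥0∞) < ((ε / 2).toNNReal : ℝ≥0) by simpa using hε)).exists
    obtain ⟨D, hDn, hD⟩ := schur ((P n)ᶜ.indicator k) (hk.indicator (hP n).compl)
      ((A n)ᶜ.indicator φ) (hφm.indicator (hA n).compl) _ hn (by
        intro s t hst
        by_cases hx : s - t ∈ A n
        · have : (s, t) ∈ P n := hx
          simp [this]
        · have : (s, t) ∉ P n := hx
          simpa [this, hx] using hbφ s t hst)
    obtain ⟨T, -, hT⟩ := schur ((P n).indicator k) (hk.indicator (hP n)) φ hφm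
      (∫⁻ x, φ x).toNNReal (ENNReal.coe_toNNReal hφfin).ge (by
        intro s t hst
        refine le_trans ?_ (hbφ s t hst)
        rw [enorm_indicator_eq_indicator_enorm]
        exact Set.indicator_le_self _ _ _)
    refine ⟨T, ?_, ?_⟩
    · refine compact_of_bdd _ (hk.indicator (hP n)) n (R.toNNReal + n) ?_ ?_ T hT
      · intro s t
        by_cases hx : (s, t) ∈ P n
        · rw [Set.indicator_of_mem hx]
          have hx' : s - t ∈ A n := hx
          refine (hbφ s t (sub_ne_zero.1 hx'.1)).trans ?_
          refine (ENNReal.ofReal_le_ofReal hx'.2.2).trans ?_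
          simp
        · simp [hx]
      · intro s t hst
        by_cases hx : (s, t) ∈ P n
        · rw [Set.indicator_of_mem hx]
          have hx' : s - t ∈ A n := hx
          have hab := abs_le.1 hx'.2.1
          apply hzero
          simp only [NNReal.coe_add, Real.coe_toNNReal _ hR.le, NNReal.coe_natCast, Set.mem_Icc,
            not_and_or, not_le] at hst
          have hn0 : (0:ℝ) ≤ n := by positivity
          rcases hst with (h | h) | (h | h)
          · right; constructor <;> linarith
          · left; constructor <;> linarith
          · right; constructor <;> linarith
          · left; constructor <;> linarith
        · simp [hx]
    · have hKT : K - T = D := by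
        ext1 u
        apply Lp.ext
        filter_upwards [Lp.coeFn_sub (K u) (T u), (hK u).2, (hT u).2, (hD u).2, (hK u).1,
          (hT u).1] with s h1 h2 h3 h4 h5 h6
        rw [sub_apply, h1, Pi.sub_apply, h2, h3, h4, ← integral_sub h5 h6]
        congr 1 with t
        by_cases hx : (s, t) ∈ P n <;> simp [hx]
      rw [dist_eq_norm, hKT]
      refine hDn.trans_lt ?_
      rw [Real.coe_toNNReal _ (by positivity)]
      linarith
  exact isClosed_setOfPred_isCompactOperator.closure_subset hcl
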